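/- Let w ∈ L^∞(0,T; L¹(ℝ²)) be such that ∇w ∈ L^{2q/(3q-2)}(0,T; L^q(ℝ²)) for all q ∈ [1,2). Then for every p ∈ (1,∞), w ∈ L^{p/(p-1)}(0,T; L^p(ℝ²)). -/

import Mathlib

/-!
The estimate is the Gagliardo–Nirenberg inequality at each fixed time, integrated in time.

For `p ≥ 2` put `q = 2p/(p+2) ∈ [1,2)`, so that `p` is the Sobolev conjugate of `q` in dimension
two and `2q/(3q-2) = p/(p-1)`. The Sobolev inequality `‖w_t‖_p ≤ C ‖∇w_t‖_q` (`sobolev`), raised to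
the power `p/(p-1)`, then reduces the claim to the hypothesis on `∇w` with exponent `q`.
For `1 < p < 2`, interpolation between `L¹` and `L²` (`interpolation`) gives
`‖w_t‖_p^{p/(p-1)} ≤ ‖w_t‖_1^{(2-p)/(p-1)} ‖w_t‖_2^2`, and the case `p = 2` finishes the proof.

Mathlib has the Sobolev inequality for compactly supported `C¹` functions. It is extended first to
`C¹` functions in `L^q` by multiplying with the dilated cutoffs `χ(x/(n+1))`, whose gradients are
`O(1/n)` (`sobolev_smooth`), and then to integrable `w` with weak gradient `g` by mollification:
`φ ⋆ w` is smooth with gradient `φ ⋆ g` (`norm_fderiv_mollify_le`), and `‖φ ⋆ g‖_q ≤ ‖g‖_q` by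
Jensen's inequality (`eLpNorm_mollify_le`). Both limits are taken with Fatou's lemma.
-/

open MeasureTheory

noncomputable section

abbrev E2 := EuclideanSpace ℝ (Fin 2)

open scoped ENNReal NNReal Convolution ContDiff

/-- Dilating a bump function by `c` multiplies the sup norm of its derivative by `c`. -/
lemma cutoff_fderiv_le (φ : ContDiffBump (0 : E2)) : ∃ K : ℝ≥0, ∀ (c : ℝ), 0 ≤ c → ∀ x : E2,
    ‖fderiv ℝ (fun y : E2 => φ (c • y)) x‖ ≤ c * K := by
  obtain ⟨K, hK⟩ := (φ.hasCompactSupport.fderiv (𝕜 := ℝ)).exists_bound_of_continuous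
    ((φ.contDiff (n := 1)).continuous_fderiv one_ne_zero)
  refine ⟨K.toNNReal, fun c hc x => ?_⟩
  rw [fderiv_comp_smul, norm_smul, Real.norm_of_nonneg hc]
  gcongr
  exact (hK _).trans (Real.le_coe_toNNReal K)

/-- The Sobolev inequality in the plane for `C¹` functions in `L^q`, without any assumption on
their support. -/
lemma sobolev_smooth (q r : ℝ≥0) (hq : 1 ≤ q) (hr : (r : ℝ)⁻¹ = (q : ℝ)⁻¹ - 2⁻¹)
    (f : E2 → ℝ) (hf : ContDiff ℝ 1 f) (hfq : eLpNorm f q volume ≠ ⊤) :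
    eLpNorm f r volume ≤ SNormLESNormFDerivOfEqConst ℝ (volume : Measure E2) q
      * eLpNorm (fderiv ℝ f) q volume := by
  set C := SNormLESNormFDerivOfEqConst ℝ (volume : Measure E2) q
  let φ : ContDiffBump (0 : E2) := ⟨1, 2, one_pos, one_lt_two⟩
  obtain ⟨K, hK⟩ := cutoff_fderiv_le φ
  let c : ℕ → ℝ := fun n => 1 / ((n : ℝ) + 1)
  have hc0 : ∀ n, 0 < c n := fun n => by positivity
  have hclim : Filter.Tendsto c Filter.atTop (nhds 0) := tendsto_one_div_add_atTop_nhds_zero_nat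
  let u : ℕ → E2 → ℝ := fun n x => φ (c n • x) * f x
  have hχ : ∀ n, ContDiff ℝ 1 (fun x : E2 => φ (c n • x)) := fun n =>
    φ.contDiff.comp (contDiff_const_smul _)
  have hu : ∀ n, ContDiff ℝ 1 (u n) := fun n => (hχ n).mul hf
  have hus : ∀ n, HasCompactSupport (u n) := fun n =>
    (φ.hasCompactSupport.comp_smul (hc0 n).ne').mul_right
  have hbound : ∀ n, eLpNorm (u n) r volume ≤
      C * (eLpNorm (fderiv ℝ f) q volume + ENNReal.ofReal (c n * K) * eLpNorm f q volume) := by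
    intro n
    refine (eLpNorm_le_eLpNorm_fderiv_of_eq volume (hu n) (hus n) hq (by simp)
      (by simpa using hr)).trans ?_
    gcongr
    have h1 : ∀ x, ‖fderiv ℝ (u n) x‖ ≤ ‖‖fderiv ℝ f x‖ + (c n * K) * ‖f x‖‖ := by
      intro x
      have hd : fderiv ℝ (u n) x = φ (c n • x) • fderiv ℝ f x
          + f x • fderiv ℝ (fun y : E2 => φ (c n • y)) x :=
        fderiv_fun_mul ((hχ n).differentiable one_ne_zero x)
          (hf.differentiable one_ne_zero x)
      rw [hd]
      have := hc0 n
      rw [Real.norm_of_nonneg (by positivity)]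
      refine (norm_add_le _ _).trans ?_
      rw [norm_smul, norm_smul]
      gcongr ?_ + ?_
      · rw [Real.norm_of_nonneg φ.nonneg]
        exact mul_le_of_le_one_left (norm_nonneg _) φ.le_one
      · rw [mul_comm]
        gcongr
        exact hK _ this.le x
    have hfd : Continuous (fderiv ℝ f) := hf.continuous_fderiv one_ne_zero
    refine (eLpNorm_mono h1).trans ?_
    refine (eLpNorm_add_le hfd.norm.aestronglyMeasurable
      (hf.continuous.norm.const_smul (c n * (K : ℝ))).aestronglyMeasurable
      (by exact_mod_cast hq)).trans ?_
    rw [eLpNorm_norm]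
    gcongr
    change eLpNorm ((c n * (K : ℝ)) • fun x => ‖f x‖) q volume ≤ _
    rw [eLpNorm_const_smul, eLpNorm_norm, Real.enorm_of_nonneg]
    have := hc0 n
    positivity
  have hlim : ∀ᵐ x ∂(volume : Measure E2),
      Filter.Tendsto (fun n => u n x) Filter.atTop (nhds (f x)) := by
    refine Filter.Eventually.of_forall fun x => ?_
    have h1 : Filter.Tendsto (fun n => φ (c n • x) * f x) Filter.atTop
        (nhds (φ ((0 : ℝ) • x) * f x)) :=
      ((φ.continuous.tendsto _).comp (hclim.smul_const x)).mul_const _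
    rwa [zero_smul, φ.one_of_mem_closedBall (by simp [φ]), one_mul] at h1
  refine (Lp.eLpNorm_lim_le_liminf_eLpNorm
    (fun n => (hu n).continuous.aestronglyMeasurable) f hlim).trans ?_
  refine (Filter.liminf_le_liminf (Filter.Eventually.of_forall hbound)).trans_eq ?_
  refine Filter.Tendsto.liminf_eq ?_
  have h2 : Filter.Tendsto (fun n => ENNReal.ofReal (c n * K) * eLpNorm f q volume)
      Filter.atTop (nhds 0) := by
    have h3 := ENNReal.tendsto_ofReal (hclim.mul_const (K : ℝ))
    simpa using ENNReal.Tendsto.mul_const h3 (Or.inr hfq)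
  have h4 := ENNReal.Tendsto.const_mul (a := (C : ℝ≥0∞)) (tendsto_const_nhds
    (x := eLpNorm (fderiv ℝ f) q volume) |>.add h2) (Or.inr ENNReal.coe_ne_top)
  simpa using h4

lemma eLpNorm_ne_top_of_bounded (q : ℝ≥0) (hq : 1 ≤ q) (f : E2 → ℝ) (hf : Integrable f)
    (M : ℝ≥0) (hM : ∀ x, ‖f x‖ₑ ≤ M) : eLpNorm f q volume ≠ ⊤ := by
  have hq' : (1 : ℝ) ≤ q := by exact_mod_cast hq
  refine (eLpNorm_lt_top_iff_lintegral_rpow_enorm_lt_top (by positivity)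
    ENNReal.coe_ne_top).2 ?_ |>.ne
  calc ∫⁻ x, ‖f x‖ₑ ^ (q : ℝ≥0∞).toReal
      ≤ ∫⁻ x, (M : ℝ≥0∞) ^ ((q : ℝ) - 1) * ‖f x‖ₑ := by
        refine lintegral_mono fun x => ?_
        have : ((q : ℝ≥0∞).toReal) = ((q : ℝ) - 1) + 1 := by simp
        rw [this, ENNReal.rpow_add_of_nonneg _ _ (by linarith) zero_le_one, ENNReal.rpow_one]
        gcongr
        exact hM x
    _ < ⊤ := by
        rw [lintegral_const_mul' _ _
          (ENNReal.rpow_ne_top_of_nonneg (by linarith) ENNReal.coe_ne_top)]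
        exact ENNReal.mul_lt_top
          (ENNReal.rpow_lt_top_of_nonneg (by linarith) ENNReal.coe_ne_top) hf.2

/-- Mollification does not increase the `L^q` norm: the mollifier is a probability density, so the
power `q` may be moved inside the average (Jensen), and Tonelli's theorem applies. -/
lemma eLpNorm_mollify_le (q : ℝ≥0) (hq : 1 ≤ q) (φ : ContDiffBump (0 : E2)) (g : E2 → E2)
    (hg : Measurable g) :
    eLpNorm (fun x => ∫ y, φ.normed volume (x - y) • g y) q volume ≤ eLpNorm g q volume := by
  have hq0 : (q : ℝ≥0∞) ≠ 0 := by positivity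
  have hq0' : (0 : ℝ) < q := by positivity
  set ρ := φ.normed (volume : Measure E2)
  have hρm : Measurable fun y => ENNReal.ofReal (ρ y) :=
    φ.continuous_normed.measurable.ennreal_ofReal
  let ν : Measure E2 := volume.withDensity fun y => ENNReal.ofReal (ρ y)
  have : IsProbabilityMeasure ν := ⟨by
    rw [withDensity_apply _ .univ, Measure.restrict_univ,
      ← ofReal_integral_eq_lintegral_ofReal φ.integrable_normed
        (Filter.Eventually.of_forall φ.nonneg_normed), φ.integral_normed, ENNReal.ofReal_one]⟩
  have hpt : ∀ x, ‖∫ y, ρ (x - y) • g y‖ₑ ^ (q : ℝ) ≤ ∫⁻ y, ‖g (x - y)‖ₑ ^ (q : ℝ) ∂ν := by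
    intro x
    have hgm : Measurable fun y => g (x - y) := hg.comp (measurable_const.sub measurable_id)
    have h1 : ‖∫ y, ρ (x - y) • g y‖ₑ ≤ eLpNorm (fun y => g (x - y)) 1 ν := by
      refine (enorm_integral_le_lintegral_enorm _).trans_eq ?_
      rw [eLpNorm_one_eq_lintegral_enorm, lintegral_withDensity_eq_lintegral_mul _ hρm hgm.enorm,
        ← lintegral_sub_left_eq_self _ x]
      refine lintegral_congr fun y => ?_
      simp only [sub_sub_cancel, enorm_smul, Pi.mul_apply]
      rw [Real.enorm_of_nonneg (φ.nonneg_normed _)]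
    have h2 := h1.trans (eLpNorm_le_eLpNorm_of_exponent_le (p := 1) (q := q)
      (by exact_mod_cast hq) hgm.aestronglyMeasurable)
    rw [eLpNorm_eq_lintegral_rpow_enorm_toReal hq0 ENNReal.coe_ne_top,
      ENNReal.coe_toReal, one_div] at h2
    exact (ENNReal.le_rpow_inv_iff hq0').1 h2
  rw [eLpNorm_eq_lintegral_rpow_enorm_toReal hq0 ENNReal.coe_ne_top,
    eLpNorm_eq_lintegral_rpow_enorm_toReal hq0 ENNReal.coe_ne_top, ENNReal.coe_toReal]
  gcongr ?_ ^ _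
  calc ∫⁻ x, ‖∫ y, ρ (x - y) • g y‖ₑ ^ (q : ℝ)
      ≤ ∫⁻ x, ∫⁻ y, ‖g (x - y)‖ₑ ^ (q : ℝ) ∂ν := lintegral_mono hpt
    _ = ∫⁻ y, (∫⁻ x, ‖g (x - y)‖ₑ ^ (q : ℝ)) ∂ν := by
        refine lintegral_lintegral_swap (μ := (volume : Measure E2)) (ν := ν)
          (f := fun x y => ‖g (x - y)‖ₑ ^ (q : ℝ)) ?_
        exact ((hg.comp (measurable_fst.sub measurable_snd)).enorm.pow_const _).aemeasurable
    _ = ∫⁻ x, ‖g x‖ₑ ^ (q : ℝ) := by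
        have h : ∀ y : E2, ∫⁻ x, ‖g (x - y)‖ₑ ^ (q : ℝ) = ∫⁻ x, ‖g x‖ₑ ^ (q : ℝ) := fun y =>
          lintegral_sub_right_eq_self (fun x => ‖g x‖ₑ ^ (q : ℝ)) y
        simp [h]

/-- The gradient of `φ ⋆ w` is `φ ⋆ g` when `g` is the weak gradient of `w`: at the point `x`, this
is the defining identity of `g` for the test function `y ↦ φ (x - y)`. -/
lemma norm_fderiv_mollify_le (φ : ContDiffBump (0 : E2)) (w : E2 → ℝ) (g : E2 → E2)
    (hw : Integrable w)
    (hgrad : ∀ ψ : E2 → ℝ, ContDiff ℝ (⊤ : ℕ∞) ψ → HasCompactSupport ψ →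
      (∫ x, w x • gradient ψ x) = - ∫ x, ψ x • g x) (x : E2) :
    ‖fderiv ℝ (φ.normed volume ⋆[ContinuousLinearMap.lsmul ℝ ℝ, volume] w) x‖
      ≤ ‖∫ y, φ.normed volume (x - y) • g y‖ := by
  set ρ := φ.normed (volume : Measure E2)
  have hρ : ContDiff ℝ (⊤ : ℕ∞) ρ := φ.contDiff_normed
  have hρ1 : ContDiff ℝ 1 ρ := φ.contDiff_normed
  have hρs : HasCompactSupport ρ := φ.hasCompactSupport_normed
  let ψ : E2 → ℝ := fun y => ρ (x - y)
  have hψ : ContDiff ℝ (⊤ : ℕ∞) ψ := hρ.comp (contDiff_const.sub contDiff_id)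
  have hψs : HasCompactSupport ψ := hρs.comp_homeomorph (Homeomorph.subLeft x)
  have hψf : ∀ y, fderiv ℝ ψ y = - fderiv ℝ ρ (x - y) := fun y => by
    have h1 : HasFDerivAt (fun y : E2 => x - y) (-ContinuousLinearMap.id ℝ E2) y :=
      (hasFDerivAt_id y).const_sub x
    have h2 := ((hρ1.differentiable one_ne_zero (x - y)).hasFDerivAt.comp y h1).fderiv
    rw [show ψ = ρ ∘ fun y => x - y from rfl, h2]
    ext v
    simp
  have hint : Integrable fun y => w y • gradient ψ y := by
    have hc : Continuous (fderiv ℝ ψ) :=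
      (hψ.of_le (m := 1) (by exact_mod_cast le_top)).continuous_fderiv one_ne_zero
    obtain ⟨K, hK⟩ := (hψs.fderiv (𝕜 := ℝ)).exists_bound_of_continuous hc
    have hgc : Continuous (gradient ψ) :=
      (InnerProductSpace.toDual ℝ E2).symm.continuous.comp hc
    refine (hw.norm.mul_const K).mono' (hw.1.smul hgc.aestronglyMeasurable)
      (Filter.Eventually.of_forall fun y => ?_)
    rw [norm_smul]
    gcongr
    rw [gradient, LinearIsometryEquiv.norm_map]
    exact hK y
  rw [(hρs.hasFDerivAt_convolution_left _ hρ1 hw.locallyIntegrable x).fderiv]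
  refine ContinuousLinearMap.opNorm_le_bound _ (norm_nonneg _) fun v => ?_
  have key : ((fderiv ℝ ρ ⋆[(ContinuousLinearMap.lsmul ℝ ℝ).precompL E2, volume] w) x) v
      = inner ℝ (∫ y, ρ (x - y) • g y) v := by
    have hex : ConvolutionExistsAt (fderiv ℝ ρ) w x
        ((ContinuousLinearMap.lsmul ℝ ℝ).precompL E2) volume :=
      (hρs.fderiv (𝕜 := ℝ)).convolutionExists_left _
        (hρ1.continuous_fderiv one_ne_zero) hw.locallyIntegrable x
    have h1 : ∫ y, ρ (x - y) • g y = - ∫ y, w y • gradient ψ y := by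
      rw [hgrad ψ hψ hψs, neg_neg]
    rw [h1, inner_neg_left, real_inner_comm, ← integral_inner hint, convolution_def,
      ContinuousLinearMap.integral_apply hex, ← integral_sub_left_eq_self _ volume x,
      ← integral_neg]
    refine integral_congr_ae (Filter.Eventually.of_forall fun y => ?_)
    simp only [sub_sub_cancel, inner_smul_right, inner_gradient_right, hψf]
    simp [ContinuousLinearMap.precompL_apply, mul_comm]
  rw [key]
  exact norm_inner_le_norm _ _

/-- The Sobolev inequality in the plane for an integrable function `w` with weak gradient `g`. -/
lemma sobolev (q r : ℝ≥0) (hq : 1 ≤ q) (hr : (r : ℝ)⁻¹ = (q : ℝ)⁻¹ - 2⁻¹)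
    (w : E2 → ℝ) (g : E2 → E2) (hw : Integrable w) (hgm : Measurable g)
    (hgrad : ∀ ψ : E2 → ℝ, ContDiff ℝ (⊤ : ℕ∞) ψ → HasCompactSupport ψ →
      (∫ x, w x • gradient ψ x) = - ∫ x, ψ x • g x) :
    eLpNorm w r volume ≤ SNormLESNormFDerivOfEqConst ℝ (volume : Measure E2) q
      * eLpNorm g q volume := by
  let φ : ℕ → ContDiffBump (0 : E2) := fun n =>
    ⟨1 / ((n : ℝ) + 1), 2 * (1 / ((n : ℝ) + 1)), by positivity,
      lt_mul_of_one_lt_left (by positivity) one_lt_two⟩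
  let f : ℕ → E2 → ℝ := fun n =>
    (φ n).normed volume ⋆[ContinuousLinearMap.lsmul ℝ ℝ, volume] w
  have hf : ∀ n, ContDiff ℝ 1 (f n) := fun n =>
    (φ n).hasCompactSupport_normed.contDiff_convolution_left (n := 1) _ (φ n).contDiff_normed
      hw.locallyIntegrable
  have hfi : ∀ n, Integrable (f n) := fun n =>
    (φ n).integrable_normed.integrable_convolution _ hw
  have hfb : ∀ n, ∃ M : ℝ≥0, ∀ x, ‖f n x‖ₑ ≤ M := by
    intro n
    obtain ⟨K, hK⟩ := (φ n).hasCompactSupport_normed (μ := volume)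
      |>.exists_bound_of_continuous (φ n).continuous_normed
    refine ⟨(K.toNNReal * ∫⁻ y, ‖w y‖ₑ).toNNReal, fun x => ?_⟩
    rw [ENNReal.coe_toNNReal (ENNReal.mul_lt_top ENNReal.coe_lt_top hw.2).ne]
    simp only [f]
    rw [convolution_eq_swap]
    refine (enorm_integral_le_lintegral_enorm _).trans ?_
    rw [← lintegral_const_mul' _ _ ENNReal.coe_ne_top]
    refine lintegral_mono fun y => ?_
    simp only [ContinuousLinearMap.lsmul_apply, enorm_smul]
    gcongr
    rw [← ofReal_norm]
    exact ENNReal.ofReal_le_ofReal (hK _)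
  have hlim : ∀ᵐ x ∂(volume : Measure E2),
      Filter.Tendsto (fun n => f n x) Filter.atTop (nhds (w x)) := by
    refine ContDiffBump.ae_convolution_tendsto_right_of_locallyIntegrable (K := 2) ?_
      (Filter.Eventually.of_forall fun n => le_rfl) hw.locallyIntegrable
    simpa [φ] using (tendsto_one_div_add_atTop_nhds_zero_nat (𝕜 := ℝ)).const_mul 2
  refine Lp.eLpNorm_le_of_ae_tendsto (u := Filter.atTop)
    (Filter.Eventually.of_forall fun n => ?_)
    (fun n => (hf n).continuous.aestronglyMeasurable) hlim
  obtain ⟨M, hM⟩ := hfb n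
  refine (sobolev_smooth q r hq hr (f n) (hf n)
    (eLpNorm_ne_top_of_bounded q hq _ (hfi n) M hM)).trans ?_
  gcongr
  exact (eLpNorm_mono (norm_fderiv_mollify_le (φ n) w g hw hgrad)).trans
    (eLpNorm_mollify_le q hq (φ n) g hgm)

/-- Hölder's inequality for `|w|^p = |w|^{2-p} (|w|^2)^{p-1}`. The last exponent `2 / (2 - 1)` is the
value of `p / (p - 1)` at `p = 2`. -/
lemma interpolation (p : ℝ) (hp1 : 1 < p) (hp2 : p < 2) (w : E2 → ℝ) (hw : Measurable w)
    (M : ℝ≥0∞) (hM : eLpNorm w 1 volume ≤ M) :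
    (eLpNorm w (ENNReal.ofReal p) volume) ^ (p / (p - 1))
      ≤ M ^ ((2 - p) / (p - 1)) * (eLpNorm w (ENNReal.ofReal 2) volume) ^ ((2 : ℝ) / (2 - 1)) := by
  have hp0 : 0 < p := by linarith
  have hp10 : 0 < p - 1 := by linarith
  rw [eLpNorm_one_eq_lintegral_enorm] at hM
  rw [eLpNorm_eq_lintegral_rpow_enorm_toReal (ENNReal.ofReal_pos.2 hp0).ne' ENNReal.ofReal_ne_top,
    eLpNorm_eq_lintegral_rpow_enorm_toReal (ENNReal.ofReal_pos.2 two_pos).ne'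
      ENNReal.ofReal_ne_top, ENNReal.toReal_ofReal hp0.le, ENNReal.toReal_ofReal two_pos.le,
    ← ENNReal.rpow_mul, ← ENNReal.rpow_mul]
  have h := ENNReal.lintegral_mul_norm_pow_le (μ := (volume : Measure E2))
    (f := fun x => ‖w x‖ₑ) (g := fun x => ‖w x‖ₑ ^ (2 : ℝ)) (p := 2 - p) (q := p - 1)
    hw.enorm.aemeasurable (hw.enorm.pow_const _).aemeasurable (by linarith) (by linarith)
    (by ring)
  have he : ∀ x, ‖w x‖ₑ ^ (2 - p) * (‖w x‖ₑ ^ (2 : ℝ)) ^ (p - 1) = ‖w x‖ₑ ^ p := fun x => by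
    rw [← ENNReal.rpow_mul, ← ENNReal.rpow_add_of_nonneg _ _ (by linarith) (by linarith)]
    congr 1
    ring
  simp_rw [he] at h
  calc (∫⁻ x, ‖w x‖ₑ ^ p) ^ (1 / p * (p / (p - 1)))
      = (∫⁻ x, ‖w x‖ₑ ^ p) ^ (1 / (p - 1)) := by
        congr 1
        field_simp
    _ ≤ (M ^ (2 - p) * (∫⁻ x, ‖w x‖ₑ ^ (2 : ℝ)) ^ (p - 1)) ^ (1 / (p - 1)) := by
        refine ENNReal.rpow_le_rpow (h.trans ?_) (by positivity)
        gcongr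
    _ = _ := by
        rw [ENNReal.mul_rpow_of_nonneg _ _ (by positivity), ← ENNReal.rpow_mul,
          ← ENNReal.rpow_mul]
        congr 2
        · ring
        · field_simp
          norm_num

/-- If `w ∈ L^∞(0,T;L¹(ℝ²))` and its (weak) gradient `g` satisfies
`∇w ∈ L^{2q/(3q-2)}(0,T;L^q(ℝ²))` for every `q ∈ [1,2)`, then
`w ∈ L^{p/(p-1)}(0,T;L^p(ℝ²))` for every `p ∈ (1,∞)`. -/
theorem stmt6 (T : ℝ) (hT : 0 < T) (w : ℝ → E2 → ℝ) (g : ℝ → E2 → E2) (B : ℝ)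
    (hwmeas : Measurable (Function.uncurry w))
    (hgmeas : Measurable (Function.uncurry g))
    (hL1 : ∀ t ∈ Set.Icc (0:ℝ) T, eLpNorm (w t) 1 volume ≤ ENNReal.ofReal B)
    (hgrad : ∀ t ∈ Set.Icc (0:ℝ) T, ∀ φ : E2 → ℝ, ContDiff ℝ (⊤ : ℕ∞) φ → HasCompactSupport φ →
      (∫ x, w t x • gradient φ x) = - ∫ x, φ x • g t x)
    (hmix : ∀ q : ℝ, 1 ≤ q → q < 2 →
      ∫⁻ t in Set.Icc (0:ℝ) T,
        (eLpNorm (g t) (ENNReal.ofReal q) volume) ^ (2 * q / (3 * q - 2)) < ⊤) :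
    ∀ p : ℝ, 1 < p →
      ∫⁻ t in Set.Icc (0:ℝ) T,
        (eLpNorm (w t) (ENNReal.ofReal p) volume) ^ (p / (p - 1)) < ⊤ := by
  have hwt : ∀ t, Measurable (w t) := fun t => hwmeas.comp measurable_prodMk_left
  have hgt : ∀ t, Measurable (g t) := fun t => hgmeas.comp measurable_prodMk_left
  have hwi : ∀ t ∈ Set.Icc (0:ℝ) T, Integrable (w t) := fun t ht =>
    memLp_one_iff_integrable.1
      ⟨(hwt t).aestronglyMeasurable, (hL1 t ht).trans_lt ENNReal.ofReal_lt_top⟩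
  have large : ∀ p : ℝ, 2 ≤ p → ∫⁻ t in Set.Icc (0:ℝ) T,
      (eLpNorm (w t) (ENNReal.ofReal p) volume) ^ (p / (p - 1)) < ⊤ := by
    intro p hp
    have hp1 : 0 < p - 1 := by linarith
    set q : ℝ := 2 * p / (p + 2) with hqdef
    have hq1 : 1 ≤ q := by rw [hqdef, le_div_iff₀] <;> linarith
    have hq2 : q < 2 := by rw [hqdef, div_lt_iff₀] <;> linarith
    have hexp : 2 * q / (3 * q - 2) = p / (p - 1) := by
      have : 3 * q - 2 = 4 * (p - 1) / (p + 2) := by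
        rw [hqdef]
        field_simp
        ring
      rw [this, hqdef]
      field_simp
      norm_num
    have hq := hmix q hq1 hq2
    rw [hexp] at hq
    set C := SNormLESNormFDerivOfEqConst ℝ (volume : Measure E2) (q.toNNReal : ℝ)
    have hC : ((C : ℝ≥0∞)) ^ (p / (p - 1)) ≠ ⊤ :=
      ENNReal.rpow_ne_top_of_nonneg (by positivity) ENNReal.coe_ne_top
    calc ∫⁻ t in Set.Icc (0:ℝ) T, (eLpNorm (w t) (ENNReal.ofReal p) volume) ^ (p / (p - 1))
        ≤ ∫⁻ t in Set.Icc (0:ℝ) T, (C : ℝ≥0∞) ^ (p / (p - 1)) *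
            (eLpNorm (g t) (ENNReal.ofReal q) volume) ^ (p / (p - 1)) := by
          refine setLIntegral_mono' measurableSet_Icc fun t ht => ?_
          rw [← ENNReal.mul_rpow_of_nonneg _ _ (by positivity)]
          refine ENNReal.rpow_le_rpow ?_ (by positivity)
          refine sobolev q.toNNReal p.toNNReal (by simpa using hq1) ?_ (w t) (g t) (hwi t ht)
            (hgt t) (hgrad t ht)
          rw [Real.coe_toNNReal _ (by linarith), Real.coe_toNNReal _ (by linarith), hqdef]
          field_simp
          ring
      _ < ⊤ := by
          rw [lintegral_const_mul' _ _ hC]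
          exact ENNReal.mul_lt_top hC.lt_top hq
  intro p hp
  obtain hp2 | hp2 := le_or_gt 2 p
  · exact large p hp2
  have hp1 : 0 < p - 1 := by linarith
  have hM : ENNReal.ofReal B ^ ((2 - p) / (p - 1)) ≠ ⊤ :=
    ENNReal.rpow_ne_top_of_nonneg (div_nonneg (by linarith) hp1.le) ENNReal.ofReal_ne_top
  refine (setLIntegral_mono' measurableSet_Icc fun t ht =>
    interpolation p hp hp2 (w t) (hwt t) _ (hL1 t ht)).trans_lt ?_
  rw [lintegral_const_mul' _ _ hM]
  exact ENNReal.mul_lt_top hM.lt_top (large 2 le_rfl)
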